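/- Let p, q ∈ [0,1] and let θ ∈ [0,π], φ ∈ [0,2π]. Set |ψ⟩ = cos(θ/2)|0⟩ + e^{iφ} sin(θ/2)|1⟩, ρ_ψ = |ψ⟩⟨ψ|, and let ρ̃_e = (1−p)(1−q)·ρ_e + p(1−q)·(I₂⊗X) ρ_e (I₂⊗X)† + (1−p)q·(I₂⊗Z) ρ_e (I₂⊗Z)† + pq·(I₂⊗(Z·X)) ρ_e (I₂⊗(Z·X))† with ρ_e = |Φ+⟩⟨Φ+|, partitioned into 2×2 blocks ρ̃_{e,ij}. Then the fidelity of Bob's teleported state for Alice's outcome 00, ρ_t = 2·(ρ_ψ^{11}ρ̃_{e,11} + ρ_ψ^{12}ρ̃_{e,12} + ρ_ψ^{21}ρ̃_{e,21} + ρ_ψ^{22}ρ̃_{e,22}), satisfies ⟨ψ| ρ_t |ψ⟩ = (1−p) − q(1−2p)·sin²θ + p(1−2q)·sin²θ·cos²φ. -/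

import Mathlib

open Matrix Kronecker Complex

noncomputable section

def PX : Matrix (Fin 2) (Fin 2) ℂ := !![0, 1; 1, 0]
def PZ : Matrix (Fin 2) (Fin 2) ℂ := !![1, 0; 0, -1]
def I2 : Matrix (Fin 2) (Fin 2) ℂ := 1

/-- Kronecker product, flattened to `Fin (m*n)` indices (row-major). -/
def kron {m n : ℕ} (A : Matrix (Fin m) (Fin m) ℂ) (B : Matrix (Fin n) (Fin n) ℂ) :
    Matrix (Fin (m * n)) (Fin (m * n)) ℂ :=
  Matrix.reindex finProdFinEquiv finProdFinEquiv (A ⊗ₖ B)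

/-- The EPR density matrix ρ_e = |Φ+⟩⟨Φ+|. -/
def rhoE : Matrix (Fin 4) (Fin 4) ℂ :=
  !![1/2, 0, 0, 1/2; 0, 0, 0, 0; 0, 0, 0, 0; 1/2, 0, 0, 1/2]

/-- The 2×2 block of a 4×4 matrix in (block-)position (a,b). -/
def blk (ρ : Matrix (Fin 4) (Fin 4) ℂ) (a b : Fin 2) : Matrix (Fin 2) (Fin 2) ℂ :=
  Matrix.of fun i j =>
    ρ ⟨2 * (a : ℕ) + (i : ℕ), by have := a.isLt; have := i.isLt; omega⟩
      ⟨2 * (b : ℕ) + (j : ℕ), by have := b.isLt; have := j.isLt; omega⟩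

/-- The Bloch-sphere pure state |ψ⟩ = cos(θ/2)|0⟩ + e^{iφ} sin(θ/2)|1⟩. -/
def ketPsi (θ φ : ℝ) : Fin 2 → ℂ :=
  ![(Real.cos (θ / 2) : ℂ), Complex.exp (φ * Complex.I) * (Real.sin (θ / 2) : ℂ)]

/-- Its density matrix ρ_ψ = |ψ⟩⟨ψ|. -/
def rhoPsi (θ φ : ℝ) : Matrix (Fin 2) (Fin 2) ℂ := vecMulVec (ketPsi θ φ) (star (ketPsi θ φ))

/-- Bob's teleported state for Alice's outcome 00 given the shared pair ρ̃_e. -/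
def rhoT (θ φ : ℝ) (ρ : Matrix (Fin 4) (Fin 4) ℂ) : Matrix (Fin 2) (Fin 2) ℂ :=
  (2 : ℂ) • (rhoPsi θ φ 0 0 • blk ρ 0 0 + rhoPsi θ φ 0 1 • blk ρ 0 1
    + rhoPsi θ φ 1 0 • blk ρ 1 0 + rhoPsi θ φ 1 1 • blk ρ 1 1)

/-- Fidelity ⟨ψ| ρ |ψ⟩ of a state ρ with respect to the pure state |ψ⟩. -/
def fidelity (θ φ : ℝ) (ρ : Matrix (Fin 2) (Fin 2) ℂ) : ℂ :=
  star (ketPsi θ φ) ⬝ᵥ (ρ *ᵥ ketPsi θ φ)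

/-!
Block by block, conjugating the shared pair by `I₂ ⊗ U` conjugates Bob's state by `U`, and the
perfect EPR pair teleports `|ψ⟩` faithfully. So an error `U` on the pair delivers `U|ψ⟩`, whose
fidelity is `|⟨ψ|U|ψ⟩|²`; here `⟨ψ|U|ψ⟩` is `fidelity θ φ U`, applied to an operator that need
not be a state. For `U = X, Z, ZX` these expectation values are the Bloch coordinates
`sin θ cos φ`, `cos θ` and, up to the phase `i`, `sin θ sin φ`; averaging over the four errors
gives the formula.
-/

lemma star_dotProduct_conj_vecMulVec_mulVec {m n R : Type*} [Fintype m] [Fintype n]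
    [CommSemiring R] [StarRing R] (A : Matrix m n R) (v : n → R) (w : m → R) :
    star w ⬝ᵥ ((A * vecMulVec v (star v) * Aᴴ) *ᵥ w) =
      (star w ⬝ᵥ (A *ᵥ v)) * star (star w ⬝ᵥ (A *ᵥ v)) := by
  have hconj : A * vecMulVec v (star v) * Aᴴ = vecMulVec (A *ᵥ v) (star (A *ᵥ v)) := by
    rw [mul_vecMulVec, vecMulVec_mul, star_mulVec]
  rw [hconj, vecMulVec_mulVec, dotProduct_smul, star_dotProduct, op_smul_eq_mul]

section Blocks

variable {m n : ℕ}

lemma kron_one_apply_finProdFinEquiv (U : Matrix (Fin n) (Fin n) ℂ) (a b : Fin m)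
    (i j : Fin n) :
    kron 1 U (finProdFinEquiv (a, i)) (finProdFinEquiv (b, j)) = if a = b then U i j else 0 := by
  simp only [kron, reindex_apply, submatrix_apply, Equiv.symm_apply_apply, kroneckerMap_apply,
    one_apply, ite_mul, one_mul, zero_mul]

lemma conjTranspose_kron (A : Matrix (Fin m) (Fin m) ℂ) (B : Matrix (Fin n) (Fin n) ℂ) :
    (kron A B)ᴴ = kron Aᴴ Bᴴ := by
  rw [kron, conjTranspose_reindex, conjTranspose_kronecker, kron]

lemma submatrix_kron_one_mul {l k : Type*} (U : Matrix (Fin n) (Fin n) ℂ)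
    (M : Matrix (Fin (m * n)) l ℂ) (a : Fin m) (c : k → l) :
    (kron (1 : Matrix (Fin m) (Fin m) ℂ) U * M).submatrix (finProdFinEquiv ∘ Prod.mk a) c =
      U * M.submatrix (finProdFinEquiv ∘ Prod.mk a) c := by
  ext i j
  simp only [submatrix_apply, mul_apply, Function.comp_apply, ← finProdFinEquiv.sum_comp,
    Fintype.sum_prod_type, kron_one_apply_finProdFinEquiv, ite_mul, zero_mul]
  rw [Finset.sum_comm]
  simp only [Finset.sum_ite_eq, Finset.mem_univ, if_true]

lemma submatrix_mul_kron_one {l k : Type*} (U : Matrix (Fin n) (Fin n) ℂ)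
    (M : Matrix l (Fin (m * n)) ℂ) (r : k → l) (b : Fin m) :
    (M * kron (1 : Matrix (Fin m) (Fin m) ℂ) U).submatrix r (finProdFinEquiv ∘ Prod.mk b) =
      M.submatrix r (finProdFinEquiv ∘ Prod.mk b) * U := by
  rw [← conjTranspose_inj, conjTranspose_submatrix, conjTranspose_mul, conjTranspose_kron,
    conjTranspose_one, submatrix_kron_one_mul, conjTranspose_mul, conjTranspose_submatrix]

end Blocks

lemma blk_eq_submatrix (ρ : Matrix (Fin 4) (Fin 4) ℂ) (a b : Fin 2) :
    blk ρ a b = ρ.submatrix (finProdFinEquiv ∘ Prod.mk a) (finProdFinEquiv ∘ Prod.mk b) := by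
  ext i j
  exact congrArg₂ ρ (Fin.ext (add_comm _ _)) (Fin.ext (add_comm _ _))

lemma blk_kron_I2_conj (U : Matrix (Fin 2) (Fin 2) ℂ) (ρ : Matrix (Fin 4) (Fin 4) ℂ)
    (a b : Fin 2) :
    blk (kron I2 U * ρ * (kron I2 U)ᴴ) a b = U * blk ρ a b * Uᴴ := by
  rw [conjTranspose_kron, I2, conjTranspose_one, blk_eq_submatrix, blk_eq_submatrix]
  exact (submatrix_mul_kron_one _ _ _ b).trans
    (congrArg (· * Uᴴ) (submatrix_kron_one_mul _ _ a _))

lemma blk_rhoE (a b : Fin 2) : blk rhoE a b = single a b (1 / 2) := by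
  ext i j
  fin_cases a <;> fin_cases b <;> fin_cases i <;> fin_cases j <;> simp [blk, rhoE]

section Teleportation

variable (θ φ : ℝ)

lemma rhoT_add (ρ σ : Matrix (Fin 4) (Fin 4) ℂ) :
    rhoT θ φ (ρ + σ) = rhoT θ φ ρ + rhoT θ φ σ := by
  have hblk (a b : Fin 2) : blk (ρ + σ) a b = blk ρ a b + blk σ a b := rfl
  simp only [rhoT, hblk]
  module

lemma rhoT_smul (c : ℝ) (ρ : Matrix (Fin 4) (Fin 4) ℂ) :
    rhoT θ φ (c • ρ) = c • rhoT θ φ ρ := by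
  have hblk (a b : Fin 2) : blk (c • ρ) a b = c • blk ρ a b := rfl
  simp only [rhoT, hblk]
  module

lemma fidelity_add (ρ σ : Matrix (Fin 2) (Fin 2) ℂ) :
    fidelity θ φ (ρ + σ) = fidelity θ φ ρ + fidelity θ φ σ := by
  simp only [fidelity, add_mulVec, dotProduct_add]

lemma fidelity_smul (c : ℝ) (ρ : Matrix (Fin 2) (Fin 2) ℂ) :
    fidelity θ φ (c • ρ) = c * fidelity θ φ ρ := by
  simp only [fidelity, smul_mulVec, dotProduct_smul, real_smul]

lemma rhoT_rhoE : rhoT θ φ rhoE = rhoPsi θ φ := by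
  rw [matrix_eq_sum_single (rhoPsi θ φ)]
  simp only [rhoT, blk_rhoE, Fin.sum_univ_two, smul_single, smul_add, smul_eq_mul, add_assoc]
  congr! 4 <;> ring

lemma rhoT_kron_I2_conj (U : Matrix (Fin 2) (Fin 2) ℂ) (ρ : Matrix (Fin 4) (Fin 4) ℂ) :
    rhoT θ φ (kron I2 U * ρ * (kron I2 U)ᴴ) = U * rhoT θ φ ρ * Uᴴ := by
  simp only [rhoT, blk_kron_I2_conj, Matrix.mul_add, Matrix.add_mul, Matrix.mul_smul,
    Matrix.smul_mul]

lemma fidelity_conj_rhoPsi (U : Matrix (Fin 2) (Fin 2) ℂ) :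
    fidelity θ φ (U * rhoPsi θ φ * Uᴴ) = normSq (fidelity θ φ U) := by
  rw [fidelity, rhoPsi, star_dotProduct_conj_vecMulVec_mulVec]
  exact mul_conj _

lemma fidelity_eq_bloch (A : Matrix (Fin 2) (Fin 2) ℂ) :
    fidelity θ φ A =
      ((A 0 0 + A 1 1) + Real.cos θ * (A 0 0 - A 1 1)
        + Real.sin θ * (Real.cos φ * (A 0 1 + A 1 0) + Real.sin φ * I * (A 0 1 - A 1 0))) / 2 := by
  obtain ⟨t, rfl⟩ : ∃ t, θ = 2 * t := ⟨θ / 2, by ring⟩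
  have hphase : exp (φ * I) = Real.cos φ + Real.sin φ * I := by
    rw [exp_mul_I, ofReal_cos, ofReal_sin]
  have ht : (Real.sin t : ℂ) ^ 2 + (Real.cos t : ℂ) ^ 2 = 1 := mod_cast Real.sin_sq_add_cos_sq t
  have hφ : (Real.sin φ : ℂ) ^ 2 + (Real.cos φ : ℂ) ^ 2 = 1 := mod_cast Real.sin_sq_add_cos_sq φ
  simp only [fidelity, ketPsi, mul_div_cancel_left₀ t (two_ne_zero' ℝ), hphase, mulVec_fin_two,
    dotProduct, Fin.sum_univ_two, Pi.star_apply, cons_val_zero, cons_val_one, cons_val_fin_one,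
    star_def, map_mul, map_add, conj_ofReal, conj_I, Real.cos_two_mul, Real.sin_two_mul,
    ofReal_mul, ofReal_sub, ofReal_pow, ofReal_ofNat, ofReal_one]
  linear_combination A 1 1 * ht + (Real.sin t : ℂ) ^ 2 * A 1 1 * (hφ - (Real.sin φ : ℂ) ^ 2 * I_sq)

lemma fidelity_one : fidelity θ φ 1 = 1 := by
  simp [fidelity_eq_bloch]

lemma fidelity_PX : fidelity θ φ PX = (Real.sin θ * Real.cos φ : ℝ) := by
  rw [fidelity_eq_bloch]
  simp only [PX, of_apply, cons_val', cons_val_zero, cons_val_one, cons_val_fin_one, ofReal_mul]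
  ring

lemma fidelity_PZ : fidelity θ φ PZ = Real.cos θ := by
  rw [fidelity_eq_bloch]
  simp only [PZ, of_apply, cons_val', cons_val_zero, cons_val_one, cons_val_fin_one]
  ring

lemma fidelity_PZ_mul_PX : fidelity θ φ (PZ * PX) = (Real.sin θ * Real.sin φ : ℝ) * I := by
  have hZX : PZ * PX = !![0, 1; -1, 0] := by simp [PZ, PX]
  rw [fidelity_eq_bloch, hZX]
  simp only [of_apply, cons_val', cons_val_zero, cons_val_one, cons_val_fin_one, ofReal_mul]
  ring

lemma fidelity_rhoPsi : fidelity θ φ (rhoPsi θ φ) = 1 := by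
  simpa [fidelity_one] using fidelity_conj_rhoPsi θ φ 1

lemma fidelity_rhoT_rhoE : fidelity θ φ (rhoT θ φ rhoE) = 1 := by
  rw [rhoT_rhoE, fidelity_rhoPsi]

lemma fidelity_rhoT_kron_I2_conj_rhoE (U : Matrix (Fin 2) (Fin 2) ℂ) :
    fidelity θ φ (rhoT θ φ (kron I2 U * rhoE * (kron I2 U)ᴴ)) = normSq (fidelity θ φ U) := by
  rw [rhoT_kron_I2_conj, rhoT_rhoE, fidelity_conj_rhoPsi]

lemma fidelity_rhoT_pauli_mixture (a b c d : ℝ) :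
    fidelity θ φ (rhoT θ φ
        (a • rhoE
          + b • (kron I2 PX * rhoE * (kron I2 PX)ᴴ)
          + c • (kron I2 PZ * rhoE * (kron I2 PZ)ᴴ)
          + d • (kron I2 (PZ * PX) * rhoE * (kron I2 (PZ * PX))ᴴ))) =
      ((a + b * (Real.sin θ * Real.cos φ) ^ 2 + c * Real.cos θ ^ 2
          + d * (Real.sin θ * Real.sin φ) ^ 2 : ℝ) : ℂ) := by
  calc
    _ = a * fidelity θ φ (rhoT θ φ rhoE)
          + b * fidelity θ φ (rhoT θ φ (kron I2 PX * rhoE * (kron I2 PX)ᴴ))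
          + c * fidelity θ φ (rhoT θ φ (kron I2 PZ * rhoE * (kron I2 PZ)ᴴ))
          + d * fidelity θ φ (rhoT θ φ (kron I2 (PZ * PX) * rhoE * (kron I2 (PZ * PX))ᴴ)) := by
      -- `kron` lands in `Fin (2 * 2)`, while `rhoT_add` and `rhoT_smul` speak of `Fin 4`.
      simp only [Nat.reduceMul, rhoT_add, rhoT_smul, fidelity_add, fidelity_smul]
    _ = _ := by
      simp only [fidelity_rhoT_rhoE, fidelity_rhoT_kron_I2_conj_rhoE, fidelity_PX, fidelity_PZ,
        fidelity_PZ_mul_PX, normSq_mul, normSq_I, normSq_ofReal]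
      push_cast
      ring

end Teleportation

theorem fidelity_classical_trajectory_general (p q θ φ : ℝ) :
    fidelity θ φ (rhoT θ φ
        (((1 - p) * (1 - q) : ℝ) • rhoE
          + (p * (1 - q) : ℝ) • (kron I2 PX * rhoE * (kron I2 PX)ᴴ)
          + ((1 - p) * q : ℝ) • (kron I2 PZ * rhoE * (kron I2 PZ)ᴴ)
          + (p * q : ℝ) • (kron I2 (PZ * PX) * rhoE * (kron I2 (PZ * PX))ᴴ))) =
      (((1 - p) - q * (1 - 2 * p) * Real.sin θ ^ 2
          + p * (1 - 2 * q) * Real.sin θ ^ 2 * Real.cos φ ^ 2 : ℝ) : ℂ) := by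
  rw [fidelity_rhoT_pauli_mixture, mul_pow, mul_pow, Real.cos_sq' θ, Real.sin_sq φ]
  congr 1
  ring

theorem fidelity_classical_trajectory (p q θ φ : ℝ) (hp : p ∈ Set.Icc (0 : ℝ) 1)
    (hq : q ∈ Set.Icc (0 : ℝ) 1)
    (hθ : θ ∈ Set.Icc (0 : ℝ) Real.pi) (hφ : φ ∈ Set.Icc (0 : ℝ) (2 * Real.pi)) :
    fidelity θ φ (rhoT θ φ
        (((1 - p) * (1 - q) : ℝ) • rhoE
          + (p * (1 - q) : ℝ) • (kron I2 PX * rhoE * (kron I2 PX)ᴴ)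
          + ((1 - p) * q : ℝ) • (kron I2 PZ * rhoE * (kron I2 PZ)ᴴ)
          + (p * q : ℝ) • (kron I2 (PZ * PX) * rhoE * (kron I2 (PZ * PX))ᴴ))) =
      (((1 - p) - q * (1 - 2 * p) * Real.sin θ ^ 2
          + p * (1 - 2 * q) * Real.sin θ ^ 2 * Real.cos φ ^ 2 : ℝ) : ℂ) :=
  fidelity_classical_trajectory_general p q θ φ

end
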